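/- arXiv:1808.00074 — 6 statements merged into one kernel-verified Lean document; each statement's English description precedes it below -/
import Mathlib

section
/- For all integers a and b with (a,b) ≠ (0,0), one has 14a² + 14b² + 32ab ≠ -2 and 14a² + 14b² + 32ab ≠ 0. (Equivalently: the quadratic form q(a,b) = 14a² + 14b² + 32ab represents neither -2 nor 0 nontrivially over the integers.) -/
/-!
Modulo 3 half of the form is `7a² + 7b² + 16ab ≡ (a - b)²`, which is never `-1`, so `-2` is not
represented. For the value `0`, completing the square gives `(7a + 8b)² = 15b²`, and 15 is not a
perfect square, so `b = 0` and then `a = 0`.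
-/

theorem quadratic_form_represents_neither_neg_two_nor_zero
    (a b : ℤ) (h : (a, b) ≠ (0, 0)) :
    14 * a ^ 2 + 14 * b ^ 2 + 32 * a * b ≠ -2 ∧
      14 * a ^ 2 + 14 * b ^ 2 + 32 * a * b ≠ 0 := by
  constructor
  · intro e
    have e' : (a - b) ^ 2 = 3 * (-2 * a ^ 2 - 2 * b ^ 2 - 6 * a * b) - 1 := by linarith
    have hm : (a - b) ^ 2 % 3 = 2 := by omega
    rcases (by omega : (a - b) % 3 = 0 ∨ (a - b) % 3 = 1 ∨ (a - b) % 3 = 2) with h | h | h <;>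
      simp [pow_two, Int.mul_emod, h] at hm
  · intro e
    have e' : (7 * a + 8 * b) ^ 2 = b ^ 2 * 15 := by linarith
    obtain ⟨k, hk⟩ : b ∣ 7 * a + 8 * b :=
      (Int.pow_dvd_pow_iff two_ne_zero).1 ⟨15, e'⟩
    by_cases hb : b = 0
    · subst hb
      apply h
      simpa using e
    · rw [hk, mul_pow] at e'
      have hk2 : k ^ 2 = 15 := mul_left_cancel₀ (pow_ne_zero 2 hb) e'
      have h1 : k < 4 := by nlinarith
      have h2 : -4 < k := by nlinarith
      interval_cases k <;> omega
end

section
/- For all integers a and b, the integer 14a² + 14b² + 32ab is even, and if it is strictly positive then it is at least 6; equivalently, 14a² + 14b² + 32ab never takes the values 1, 2, 3, 4, or 5. -/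
/-!
Write the form as `2 * f` with `f = 7a² + 7b² + 16ab`; it must be shown that `f` is neither `1`
nor `2`. Since the discriminant `60` of `f` is divisible by `3` and `5`, `f` degenerates to a
multiple of a square modulo each: `f ≡ (a - b)²` modulo `3`, so `f ≠ 2`, and `f ≡ 2(a - b)²`
modulo `5`, so `f ≠ 1`.
-/

theorem quadratic_form_even_and_min_positive_value_six (a b : ℤ) :
    Even (14 * a ^ 2 + 14 * b ^ 2 + 32 * a * b) ∧
      (0 < 14 * a ^ 2 + 14 * b ^ 2 + 32 * a * b →
        6 ≤ 14 * a ^ 2 + 14 * b ^ 2 + 32 * a * b) := by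
  refine ⟨⟨7 * a ^ 2 + 7 * b ^ 2 + 16 * a * b, by ring⟩, fun hpos => ?_⟩
  have sq_mod_three : (a - b) ^ 2 % 3 ≠ 2 := by
    have h : (a - b) % 3 = 0 ∨ (a - b) % 3 = 1 ∨ (a - b) % 3 = 2 := by omega
    rcases h with h | h | h <;> simp [pow_two, Int.mul_emod, h]
  have sq_mod_five : 2 * (a - b) ^ 2 % 5 ≠ 1 := by
    have h : (a - b) % 5 = 0 ∨ (a - b) % 5 = 1 ∨ (a - b) % 5 = 2 ∨ (a - b) % 5 = 3 ∨
        (a - b) % 5 = 4 := by omega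
    rcases h with h | h | h | h | h <;> simp [pow_two, Int.mul_emod, h]
  have form_mod_three : 14 * a ^ 2 + 14 * b ^ 2 + 32 * a * b =
      2 * ((a - b) ^ 2 + 3 * (2 * a ^ 2 + 2 * b ^ 2 + 6 * a * b)) := by ring
  have form_mod_five : 14 * a ^ 2 + 14 * b ^ 2 + 32 * a * b =
      2 * (2 * (a - b) ^ 2 + 5 * (a ^ 2 + b ^ 2 + 4 * a * b)) := by ring
  -- The polynomial expressions are made opaque, so that only linear arithmetic remains.
  generalize 14 * a ^ 2 + 14 * b ^ 2 + 32 * a * b = q at *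
  generalize 2 * a ^ 2 + 2 * b ^ 2 + 6 * a * b = u at *
  generalize a ^ 2 + b ^ 2 + 4 * a * b = v at *
  generalize (a - b) ^ 2 = s at *
  by_contra hlt
  have hq : q = 2 ∨ q = 4 := by omega
  rcases hq with rfl | rfl
  · omega
  · omega
end

section
/- There do not exist integers a and b such that, setting c = 1 - a and d = -b, all three integers 14a² + 14b² + 32ab, 14c² + 14d² + 32cd, and 14ac + 14bd + 16(ad + bc) are strictly positive. -/
/-!
The form `q(a,b) = 14a² + 14b² + 32ab` equals `2 (7 (a - b)² + 30ab)`, so `q/2` is a square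
modulo 3 and twice a square modulo 5. Hence `q/2` is neither 2 nor 1, and every positive value
of `q` is at least 6. If `H = N + M` with `N² > 0` and `M² > 0`, then
`14 = N² + M² + 2 N·M ≥ 12 + 2 N·M`, so `N·M ≤ 1`; as `N·M` is even, it is not positive.
-/

/-- The smallest positive value of the intersection form is at least 6. -/
lemma six_le_of_pos (a b : ℤ) (h : 0 < 14 * a ^ 2 + 14 * b ^ 2 + 32 * a * b) :
    6 ≤ 14 * a ^ 2 + 14 * b ^ 2 + 32 * a * b := by
  have key : 14 * a ^ 2 + 14 * b ^ 2 + 32 * a * b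
      = 2 * (7 * ((a - b) * (a - b)) + 30 * (a * b)) := by ring
  rw [key] at h ⊢
  generalize a - b = s at *
  have h3 : s * s % 3 = 0 ∨ s * s % 3 = 1 := by
    have : s % 3 = 0 ∨ s % 3 = 1 ∨ s % 3 = 2 := by omega
    rcases this with h | h | h <;> simp [Int.mul_emod, h]
  have h5 : s * s % 5 = 0 ∨ s * s % 5 = 1 ∨ s * s % 5 = 4 := by
    have : s % 5 = 0 ∨ s % 5 = 1 ∨ s % 5 = 2 ∨ s % 5 = 3 ∨ s % 5 = 4 := by omega
    rcases this with h | h | h | h | h <;> simp [Int.mul_emod, h]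
  generalize s * s = t at *
  generalize a * b = p at *
  omega

theorem H_indecomposable :
    ¬ ∃ a b : ℤ,
      0 < 14 * a ^ 2 + 14 * b ^ 2 + 32 * a * b ∧
      0 < 14 * (1 - a) ^ 2 + 14 * (-b) ^ 2 + 32 * (1 - a) * (-b) ∧
      0 < 14 * a * (1 - a) + 14 * b * (-b) + 16 * (a * (-b) + b * (1 - a)) := by
  rintro ⟨a, b, hN, hM, hNM⟩
  have h1 := six_le_of_pos a b hN
  have h2 := six_le_of_pos (1 - a) (-b) hM
  have heven : 14 * a * (1 - a) + 14 * b * (-b) + 16 * (a * (-b) + b * (1 - a))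
      = 2 * (7 * a * (1 - a) + 7 * b * (-b) + 8 * (a * (-b) + b * (1 - a))) := by ring
  -- `H² = N² + M² + 2 N·M`
  have hsum : (14 * a ^ 2 + 14 * b ^ 2 + 32 * a * b)
      + (14 * (1 - a) ^ 2 + 14 * (-b) ^ 2 + 32 * (1 - a) * (-b))
      + 2 * (14 * a * (1 - a) + 14 * b * (-b) + 16 * (a * (-b) + b * (1 - a))) = 14 := by ring
  have hle : 14 * a * (1 - a) + 14 * b * (-b) + 16 * (a * (-b) + b * (1 - a)) ≤ 1 := by linarith
  rw [heven] at hle hNM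
  omega
end

section
/- There do not exist integers a and b such that, setting c = -a and d = 1 - b, all three integers 14a² + 14b² + 32ab, 14c² + 14d² + 32cd, and 14ac + 14bd + 16(ad + bc) are strictly positive. -/
/-!
Write `N = aH + bC` and `M = C - N`. Since `(N + M)² = C² = 14`, positivity of `N²`, `M²` and `N·M`
forces `N·M < 7`. The lattice has discriminant `-60` and `N`, `M` have coordinate determinant `a`,
so `(N·M)² = N² M² + 60 a²`; as `(N·M)² < 49`, this gives `a = 0`. Then `N·M = 14 b (1 - b)`,
which is never positive for an integer `b`.
-/

theorem C_indecomposable :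
    ¬ ∃ a b : ℤ,
      0 < 14 * a ^ 2 + 14 * b ^ 2 + 32 * a * b ∧
      0 < 14 * (-a) ^ 2 + 14 * (1 - b) ^ 2 + 32 * (-a) * (1 - b) ∧
      0 < 14 * a * (-a) + 14 * b * (1 - b) + 16 * (a * (1 - b) + b * (-a)) := by
  rintro ⟨a, b, hN, hM, hNM⟩
  obtain ⟨n, hn⟩ : ∃ n, n = 14 * a ^ 2 + 14 * b ^ 2 + 32 * a * b := ⟨_, rfl⟩
  obtain ⟨m, hm⟩ : ∃ m, m = 14 * (-a) ^ 2 + 14 * (1 - b) ^ 2 + 32 * (-a) * (1 - b) := ⟨_, rfl⟩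
  obtain ⟨k, hk⟩ : ∃ k, k = 14 * a * (-a) + 14 * b * (1 - b) + 16 * (a * (1 - b) + b * (-a)) :=
    ⟨_, rfl⟩
  have hsum : n + m + 2 * k = 14 := by rw [hn, hm, hk]; ring
  have hdisc : k ^ 2 = n * m + 60 * a ^ 2 := by rw [hn, hm, hk]; ring
  rw [← hn] at hN
  rw [← hm] at hM
  rw [← hk] at hNM
  have hk7 : k < 7 := by linarith
  have ha : a = 0 := by
    by_contra ha
    have ha2 : 0 < a ^ 2 := by positivity
    nlinarith [mul_pos hN hM]
  subst ha
  have hb : 0 < b * (1 - b) := by linarith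
  rcases le_or_gt b 0 with h | h <;> nlinarith
end

section
/- There are no integers a and b with 1 ≤ 14a + 16b ≤ 5 and 14a² + 14b² + 32ab ≥ -2. -/
theorem no_effective_divisor_small_degree :
    ¬ ∃ a b : ℤ,
      1 ≤ 14 * a + 16 * b ∧ 14 * a + 16 * b ≤ 5 ∧
      -2 ≤ 14 * a ^ 2 + 14 * b ^ 2 + 32 * a * b := by
  rintro ⟨a, b, h1, h5, hA⟩
  -- The Hodge index inequality for the class `aH + bC`, with its defect `60 b ^ 2` made explicit.
  have key : 14 * (14 * a ^ 2 + 14 * b ^ 2 + 32 * a * b)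
      = (14 * a + 16 * b) ^ 2 - 60 * b ^ 2 := by ring
  have hd : (14 * a + 16 * b) ^ 2 ≤ 25 := by nlinarith
  -- Now `60 * b ^ 2 ≤ 25 + 28 < 60` forces `b = 0`, and no multiple of 14 lies in `[1, 5]`.
  have hb : b ^ 2 < 1 := by linarith
  have hb0 : b = 0 := by
    have h_lt : b < 1 := by nlinarith
    have h_gt : -1 < b := by nlinarith
    omega
  omega
end

section
/- The integer solutions (a, a₁, a₂, a₃, a₄, a₅, a₆) of the system a² = a₁² + a₂² + a₃² + a₄² + a₅² + a₆² and a₁ + a₂ + a₃ + a₄ + a₅ + a₆ = -3a - 2 are exactly, up to permutation of (a₁, …, a₆): (a; a₁,…,a₆) = (-1; 1,0,0,0,0,0), (-2; 1,1,1,1,0,0), and (-3; 2,1,1,1,1,1). -/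
/-!
Cauchy–Schwarz gives `(3a + 2)² ≤ 6a²`, which leaves only `a = -1, -2, -3`. For `a = -1` and
`a = -2` the sum of the `aᵢ` equals the sum of their squares; since `x ≤ x²` for every integer `x`,
with equality only at `0` and `1`, all `aᵢ` lie in `{0, 1}`. For `a = -3` the same holds for the
shifted integers `aᵢ - 1`. Counting the ones determines the multiset. Conversely, both equations
depend only on the multiset of the `aᵢ`.
-/

/-- Equality in `∑ xᵢ ≤ ∑ xᵢ²` over the integers forces every `xᵢ` to be `0` or `1`. -/
lemma eq_zero_or_one_of_sum_eq_sum_sq {x1 x2 x3 x4 x5 x6 : ℤ}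
    (h : x1 + x2 + x3 + x4 + x5 + x6 =
      x1 ^ 2 + x2 ^ 2 + x3 ^ 2 + x4 ^ 2 + x5 ^ 2 + x6 ^ 2) :
    (x1 = 0 ∨ x1 = 1) ∧ (x2 = 0 ∨ x2 = 1) ∧ (x3 = 0 ∨ x3 = 1) ∧
      (x4 = 0 ∨ x4 = 1) ∧ (x5 = 0 ∨ x5 = 1) ∧ (x6 = 0 ∨ x6 = 1) := by
  have le_sq (x : ℤ) : x ≤ x ^ 2 := Int.le_self_sq x
  have of_sq_le (x : ℤ) (hx : x ^ 2 ≤ x) : x = 0 ∨ x = 1 := by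
    have : 0 ≤ x := (sq_nonneg x).trans hx
    have : x ≤ 1 := by nlinarith
    omega
  have h1 := le_sq x1
  have h2 := le_sq x2
  have h3 := le_sq x3
  have h4 := le_sq x4
  have h5 := le_sq x5
  have h6 := le_sq x6
  refine ⟨of_sq_le _ ?_, of_sq_le _ ?_, of_sq_le _ ?_, of_sq_le _ ?_, of_sq_le _ ?_,
    of_sq_le _ ?_⟩ <;> linarith

/-- Both sides of the system are symmetric functions of the `aᵢ`. -/
lemma sum_and_sum_sq_of_multiset_eq {x1 x2 x3 x4 x5 x6 y1 y2 y3 y4 y5 y6 : ℤ}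
    (h : ({x1, x2, x3, x4, x5, x6} : Multiset ℤ) = {y1, y2, y3, y4, y5, y6}) :
    x1 + x2 + x3 + x4 + x5 + x6 = y1 + y2 + y3 + y4 + y5 + y6 ∧
      x1 ^ 2 + x2 ^ 2 + x3 ^ 2 + x4 ^ 2 + x5 ^ 2 + x6 ^ 2 =
        y1 ^ 2 + y2 ^ 2 + y3 ^ 2 + y4 ^ 2 + y5 ^ 2 + y6 ^ 2 := by
  have hsum := congrArg Multiset.sum h
  have hsq := congrArg (fun s : Multiset ℤ => (s.map (· ^ 2)).sum) h
  simp only [Multiset.insert_eq_cons, Multiset.map_cons, Multiset.map_singleton,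
    Multiset.sum_cons, Multiset.sum_singleton] at hsum hsq
  constructor <;> linarith

/-- Cauchy–Schwarz turns the system into `3a² + 12a + 4 ≤ 0`. -/
lemma first_coord_cases {a x1 x2 x3 x4 x5 x6 : ℤ}
    (hsq : a ^ 2 = x1 ^ 2 + x2 ^ 2 + x3 ^ 2 + x4 ^ 2 + x5 ^ 2 + x6 ^ 2)
    (hsum : x1 + x2 + x3 + x4 + x5 + x6 = -3 * a - 2) :
    a = -1 ∨ a = -2 ∨ a = -3 := by
  have cs : (x1 + x2 + x3 + x4 + x5 + x6) ^ 2 ≤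
      6 * (x1 ^ 2 + x2 ^ 2 + x3 ^ 2 + x4 ^ 2 + x5 ^ 2 + x6 ^ 2) := by
    have := sq_sum_le_card_mul_sum_sq (s := Finset.univ) (f := ![x1, x2, x3, x4, x5, x6])
    simpa [Fin.sum_univ_succ, add_assoc] using this
  rw [← hsq, hsum] at cs
  have : -4 < a := by nlinarith
  have : a < 0 := by nlinarith
  omega

theorem palatini_system_classification
    (a a1 a2 a3 a4 a5 a6 : ℤ) :
    (a ^ 2 = a1 ^ 2 + a2 ^ 2 + a3 ^ 2 + a4 ^ 2 + a5 ^ 2 + a6 ^ 2 ∧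
      a1 + a2 + a3 + a4 + a5 + a6 = -3 * a - 2) ↔
    ((a = -1 ∧ ({a1, a2, a3, a4, a5, a6} : Multiset ℤ) = {1, 0, 0, 0, 0, 0}) ∨
     (a = -2 ∧ ({a1, a2, a3, a4, a5, a6} : Multiset ℤ) = {1, 1, 1, 1, 0, 0}) ∨
     (a = -3 ∧ ({a1, a2, a3, a4, a5, a6} : Multiset ℤ) = {2, 1, 1, 1, 1, 1})) := by
  constructor
  · rintro ⟨hsq, hsum⟩
    rcases first_coord_cases hsq hsum with rfl | rfl | rfl
    · refine Or.inl ⟨rfl, ?_⟩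
      obtain ⟨h1, h2, h3, h4, h5, h6⟩ :=
        eq_zero_or_one_of_sum_eq_sum_sq (hsum.trans (by linarith))
      clear hsq
      rcases h1 with rfl | rfl <;> rcases h2 with rfl | rfl <;> rcases h3 with rfl | rfl <;>
        rcases h4 with rfl | rfl <;> rcases h5 with rfl | rfl <;> rcases h6 with rfl | rfl <;>
        first
        | omega
        | decide
    · refine Or.inr (Or.inl ⟨rfl, ?_⟩)
      obtain ⟨h1, h2, h3, h4, h5, h6⟩ :=
        eq_zero_or_one_of_sum_eq_sum_sq (hsum.trans (by linarith))
      clear hsq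
      rcases h1 with rfl | rfl <;> rcases h2 with rfl | rfl <;> rcases h3 with rfl | rfl <;>
        rcases h4 with rfl | rfl <;> rcases h5 with rfl | rfl <;> rcases h6 with rfl | rfl <;>
        first
        | omega
        | decide
    · refine Or.inr (Or.inr ⟨rfl, ?_⟩)
      -- The shifted integers have sum `7 - 6 = 1` and sum of squares `9 - 2 * 7 + 6 = 1`.
      have hshift : (a1 - 1) + (a2 - 1) + (a3 - 1) + (a4 - 1) + (a5 - 1) + (a6 - 1) =
          (a1 - 1) ^ 2 + (a2 - 1) ^ 2 + (a3 - 1) ^ 2 + (a4 - 1) ^ 2 + (a5 - 1) ^ 2 +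
            (a6 - 1) ^ 2 := by
        linarith
      have h := eq_zero_or_one_of_sum_eq_sum_sq hshift
      simp only [sub_eq_iff_eq_add, zero_add, one_add_one_eq_two] at h
      obtain ⟨h1, h2, h3, h4, h5, h6⟩ := h
      clear hsq hshift
      rcases h1 with rfl | rfl <;> rcases h2 with rfl | rfl <;> rcases h3 with rfl | rfl <;>
        rcases h4 with rfl | rfl <;> rcases h5 with rfl | rfl <;> rcases h6 with rfl | rfl <;>
        first
        | omega
        | decide
  · rintro (⟨rfl, h⟩ | ⟨rfl, h⟩ | ⟨rfl, h⟩) <;>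
      obtain ⟨hsum, hsq⟩ := sum_and_sum_sq_of_multiset_eq h <;>
      constructor <;> linarith
end
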